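/- For every integer m > 1, every radius a ≥ 1, every finite graph H, and every subset S of the vertices of H: in the random uniform attachment graph process with degree cap d = 2m, the probability that there exists a graph isomorphism from the subgraph of G_n induced on the set of all vertices at graph distance at most a from some open vertex of G_n onto H which maps the set of open vertices of G_n onto S, converges as n → ∞. -/

import Mathlib

open Finset MeasureTheory Filter Topology FirstOrder
open scoped ENNReal

noncomputable section

open scoped Classical

/-- The degree of vertex `v` in the graph `g`, counting neighbors among `{1, …, n}`. -/
def degIn (g : SimpleGraph ℕ) (n v : ℕ) : ℕ :=
  ((Finset.Icc 1 n).filter fun u => g.Adj v u).card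

/-- The set of neighbors of vertex `v` in the graph `g` among `{1, …, n}`. -/
def nbrsIn (g : SimpleGraph ℕ) (n v : ℕ) : Finset ℕ :=
  (Finset.Icc 1 n).filter fun u => g.Adj v u

/-- `g'` is obtained from `g` (a graph on `{1,…,n}`) by one admissible uniform-attachment
step with parameter `m` and degree cap `d = 2m`: the new vertex `n+1` is joined to `m`
distinct vertices of `{1,…,n}`, each of degree `< 2m` in `g`; adjacencies among the other
vertices are unchanged, and all edges of `g'` stay inside `{1,…,n+1}`. -/
def IsUAStep (m n : ℕ) (g g' : SimpleGraph ℕ) : Prop :=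
  (∀ u v, g'.Adj u v → u ∈ Finset.Icc 1 (n+1) ∧ v ∈ Finset.Icc 1 (n+1)) ∧
  (∀ u v, u ≠ n+1 → v ≠ n+1 → (g'.Adj u v ↔ g.Adj u v)) ∧
  (nbrsIn g' (n+1) (n+1)).card = m ∧
  (∀ u, g'.Adj (n+1) u → u ∈ Finset.Icc 1 n ∧ degIn g n u < 2*m)

/-- The complete graph on the vertex set `{1, …, k}` (as a graph on `ℕ`). -/
def completeOn (k : ℕ) : SimpleGraph ℕ :=
  SimpleGraph.fromRel (fun u v => u ∈ Finset.Icc 1 k ∧ v ∈ Finset.Icc 1 k)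

/-- `N(g)`: the number of `m`-element sets of vertices of degree `< 2m` of a graph `g`
on `{1,…,n}`. -/
def numOpenSets (m n : ℕ) (g : SimpleGraph ℕ) : ℕ :=
  (((Finset.Icc 1 n).filter fun v => degIn g n v < 2*m).card).choose m

/-- The random uniform attachment graph process with parameter `m` (degree cap `d = 2m`),
modeled by random variables `G n` (for `n ≥ m+1`) on a probability space `(Ω, P)` taking
values in simple graphs on `{1,…,n}`: `G (m+1)` is a.s. the complete graph on `{1,…,m+1}`;
a.s. each `G (n+1)` is obtained from `G n` by an admissible uniform attachment step; and
for every graph `g` on `{1,…,n}` and every `m`-element set `S` of vertices of degree `< 2m`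
of `g`, `P(G n = g and the neighborhood of n+1 in G (n+1) equals S) = P(G n = g) / N(g)`. -/
structure UAProcess (m : ℕ) {Ω : Type} [MeasurableSpace Ω] (P : Measure Ω) where
  G : ℕ → Ω → SimpleGraph ℕ
  meas : ∀ n H, MeasurableSet {ω | G n ω = H}
  init : P {ω | G (m+1) ω = completeOn (m+1)} = 1
  stepAdm : ∀ n, m+1 ≤ n → P {ω | IsUAStep m n (G n ω) (G (n+1) ω)} = 1
  stepUnif : ∀ n, m+1 ≤ n → ∀ g : SimpleGraph ℕ,
    (∀ u v, g.Adj u v → u ∈ Finset.Icc 1 n ∧ v ∈ Finset.Icc 1 n) →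
    ∀ S : Finset ℕ, S.card = m →
    (∀ v ∈ S, v ∈ Finset.Icc 1 n ∧ degIn g n v < 2*m) →
    P {ω | G n ω = g ∧ nbrsIn (G (n+1) ω) (n+1) (n+1) = S} =
      P {ω | G n ω = g} / (numOpenSets m n g : ℝ≥0∞)

/-- The ball of radius `a` around `v` in `g`: all vertices joined to `v` by a walk of
length at most `a` (i.e. at graph distance at most `a` from `v`). -/
def ballSet (g : SimpleGraph ℕ) (v a : ℕ) : Set ℕ := {u | ∃ p : g.Walk v u, p.length ≤ a}

/-- The set of open vertices of the graph `g` on `{1,…,n}`: vertices of degree `< 2m`. -/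
def openVerts (m n : ℕ) (g : SimpleGraph ℕ) : Set ℕ :=
  {v | v ∈ Finset.Icc 1 n ∧ degIn g n v < 2*m}

/-- The set of all vertices at graph distance at most `a` from some open vertex of the
graph `g` on `{1,…,n}`. -/
def openNbhd (m n a : ℕ) (g : SimpleGraph ℕ) : Set ℕ :=
  {u | ∃ v ∈ openVerts m n g, u ∈ ballSet g v a}

/-!
The edges are counted so that the open vertices can always absorb exactly `m * (m + 1)` further
edges. Hence there are boundedly many of them, and each admissible step has probability bounded
below. Moreover, from every state `m + 1` new vertices can be joined to the old open vertices only,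
so that all of these become closed. Afterwards the open vertices are among the new ones, which have
degree `m` and no edges between them: this looks the same from every initial state.

If two states look the same near their open vertices, then their admissible steps correspond to each
other and preserve this. Closing all open vertices once more, in parallel, pushes the possible
differences one step further away. So from any two states, `(a + 1) * (m + 1)` steps can lead to
states whose `a`-neighborhoods of the open vertices are isomorphic and remain so under corresponding
steps. By Doeblin's argument, the law of the neighborhood type forgets the initial state
exponentially fast.
-/

/-! ### Uniform random walks -/

lemma exists_tendsto_of_contracting_bounds {lo hi : ℕ → ℝ} (hlo : Monotone lo) (hhi : Antitone hi)
    (hle : ∀ k, lo k ≤ hi k) {r : ℝ} (hr : r < 1) {K : ℕ}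
    (hcontract : ∀ k, hi (k + K) - lo (k + K) ≤ r * (hi k - lo k)) :
    ∃ L, Tendsto lo atTop (𝓝 L) ∧ Tendsto hi atTop (𝓝 L) := by
  have hlo_lim := tendsto_atTop_ciSup hlo
    ⟨hi 0, Set.forall_mem_range.2 fun k => (hle k).trans (hhi k.zero_le)⟩
  have hhi_lim := tendsto_atTop_ciInf hhi
    ⟨lo 0, Set.forall_mem_range.2 fun k => (hlo k.zero_le).trans (hle k)⟩
  have hgap := hhi_lim.sub hlo_lim
  have hle_lim := le_of_tendsto_of_tendsto' hlo_lim hhi_lim hle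
  have hgap_le := le_of_tendsto_of_tendsto' ((tendsto_add_atTop_iff_nat K).2 hgap)
    (hgap.const_mul r) hcontract
  have heq : ⨅ k, hi k = ⨆ k, lo k := by nlinarith
  exact ⟨_, hlo_lim, heq ▸ hhi_lim⟩

lemma ciSup_sub_ciInf_le {β : Type*} [Nonempty β] {g : β → ℝ} {c : ℝ}
    (h : ∀ x y, g x - g y ≤ c) : (⨆ x, g x) - ⨅ x, g x ≤ c := by
  have hsup (y : β) : ⨆ x, g x ≤ g y + c := ciSup_le fun x => by linarith [h x y]
  have hinf := le_ciInf fun y => sub_le_iff_le_add.2 (hsup y)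
  linarith

section UniformWalk

open scoped BigOperators

variable {α : Type*} {ι : α → Type*} {step : ∀ x, ι x → α}

/-- `ReachIn step k x y`: the state `y` can be reached from `x` by `k` steps. -/
inductive ReachIn (step : ∀ x, ι x → α) : ℕ → α → α → Prop
  | refl (x : α) : ReachIn step 0 x x
  | head {k : ℕ} {x y : α} (i : ι x) (h : ReachIn step k (step x i) y) : ReachIn step (k + 1) x y

/-- Related states have moves which correspond bijectively to each other and lead to related
states. -/
def IsBisimulation (step : ∀ x, ι x → α) (R : α → α → Prop) : Prop :=
  ∀ ⦃x y⦄, R x y → ∃ e : ι x ≃ ι y, ∀ i, R (step x i) (step y (e i))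

lemma ReachIn.trans {k l : ℕ} {x y z : α} (hxy : ReachIn step k x y) (hyz : ReachIn step l y z) :
    ReachIn step (k + l) x z := by
  induction hxy with
  | refl => rwa [Nat.zero_add]
  | head i _ ih => exact Nat.add_right_comm .. ▸ .head i (ih hyz)

variable [∀ x, Fintype (ι x)]

/-- The averaging operator of the random walk which, at a state `x`, chooses a move `i : ι x`
uniformly and goes to `step x i`. -/
def walkMean (step : ∀ x, ι x → α) : Module.End ℝ (α → ℝ) where
  toFun f x := 𝔼 i, f (step x i)
  map_add' _ _ := funext fun _ => expect_add_distrib ..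
  map_smul' c f := funext fun x => (smul_expect c _ fun i => f (step x i)).symm

lemma walkMean_apply (f : α → ℝ) (x : α) : walkMean step f x = 𝔼 i, f (step x i) := rfl

lemma walkMean_mono : Monotone (walkMean step) :=
  fun _ _ h x => expect_le_expect fun i _ => h (step x i)

lemma walkMean_pow_mono (k : ℕ) : Monotone (walkMean step ^ k) := by
  rw [Module.End.coe_pow]
  exact walkMean_mono.iterate k

lemma walkMean_pow_const [∀ x, Nonempty (ι x)] (k : ℕ) (c : ℝ) :
    (walkMean step ^ k) (Function.const α c) = Function.const α c := by
  rw [Module.End.coe_pow]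
  exact Function.iterate_fixed (funext fun x => Fintype.expect_const c) k

lemma le_walkMean_pow [∀ x, Nonempty (ι x)] {f : α → ℝ} {c : ℝ} (h : ∀ x, c ≤ f x) (k : ℕ)
    (x : α) : c ≤ (walkMean step ^ k) f x := by
  have := walkMean_pow_mono (step := step) k (show Function.const α c ≤ f from h) x
  rwa [walkMean_pow_const] at this

lemma walkMean_pow_le [∀ x, Nonempty (ι x)] {f : α → ℝ} {c : ℝ} (h : ∀ x, f x ≤ c) (k : ℕ)
    (x : α) : (walkMean step ^ k) f x ≤ c := by
  have := walkMean_pow_mono (step := step) k (show f ≤ Function.const α c from h) x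
  rwa [walkMean_pow_const] at this

lemma IsBisimulation.walkMean_pow_eq {R : α → α → Prop} (hR : IsBisimulation step R) {f : α → ℝ}
    (hf : ∀ x y, R x y → f x = f y) (k : ℕ) {x y : α} (h : R x y) :
    (walkMean step ^ k) f x = (walkMean step ^ k) f y := by
  induction k generalizing x y with
  | zero => exact hf x y h
  | succ k ih =>
    obtain ⟨e, he⟩ := hR h
    rw [pow_succ', Module.End.mul_apply]
    exact Fintype.expect_equiv e _ _ fun i => ih (he i)

lemma ReachIn.le_pow_mul_walkMean_pow {f : α → ℝ} (hf : 0 ≤ f) {C : ℕ}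
    (hC : ∀ x, Fintype.card (ι x) ≤ C) {k : ℕ} {x y : α} (h : ReachIn step k x y) :
    f y ≤ C ^ k * (walkMean step ^ k) f x := by
  induction h with
  | refl => simp
  | @head k x y i _ ih =>
    set g := (walkMean step ^ k) f
    have hg : 0 ≤ g := by simpa using walkMean_pow_mono (step := step) k hf
    calc f y ≤ C ^ k * g (step x i) := ih
      _ ≤ C ^ k * ∑ j, g (step x j) := by
        gcongr
        exact single_le_sum (fun j _ => hg (step x j)) (mem_univ i)
      _ = C ^ k * (Fintype.card (ι x) * walkMean step g x) := by
        rw [walkMean_apply, Fintype.card_mul_expect]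
      _ ≤ C ^ k * (C * walkMean step g x) := by
        gcongr
        · simpa using walkMean_mono (step := step) hg x
        · exact hC x
      _ = C ^ (k + 1) * (walkMean step ^ (k + 1)) f x := by
        rw [pow_succ' (walkMean step), Module.End.mul_apply, pow_succ, mul_assoc]

/-- Doeblin's estimate: the walks from `x` and `y` can be coupled so as to meet with probability at
least `(C ^ K)⁻¹`. -/
lemma walkMean_pow_sub_le [∀ x, Nonempty (ι x)] {f : α → ℝ} {lo hi : ℝ} (hlo : ∀ x, lo ≤ f x)
    (hhi : ∀ x, f x ≤ hi) {C : ℕ} (hC : ∀ x, Fintype.card (ι x) ≤ C) {K : ℕ}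
    {x y x' y' : α} (hx : ReachIn step K x x') (hy : ReachIn step K y y') (hxy : f x' = f y') :
    (walkMean step ^ K) f x - (walkMean step ^ K) f y ≤ (1 - ((C : ℝ) ^ K)⁻¹) * (hi - lo) := by
  have hC₀ : 0 < C := Fintype.card_pos.trans_le (hC x)
  have hupper := hx.le_pow_mul_walkMean_pow (f := Function.const α hi - f)
    (fun z => sub_nonneg.2 (hhi z)) hC
  have hlower := hy.le_pow_mul_walkMean_pow (f := f - Function.const α lo)
    (fun z => sub_nonneg.2 (hlo z)) hC
  rw [map_sub, walkMean_pow_const, ← inv_mul_le_iff₀ (by positivity)] at hupper hlower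
  simp only [Pi.sub_apply, Function.const_apply] at hupper hlower
  rw [hxy] at hupper
  linarith

theorem IsBisimulation.exists_tendsto_walkMean_pow [Nonempty α] [∀ x, Nonempty (ι x)]
    {R : α → α → Prop} (hR : IsBisimulation step R) {K C : ℕ}
    (hmeet : ∀ x y, ∃ x' y', ReachIn step K x x' ∧ ReachIn step K y y' ∧ R x' y')
    (hC : ∀ x, Fintype.card (ι x) ≤ C) {f : α → ℝ} {lo hi : ℝ} (hlo : ∀ x, lo ≤ f x)
    (hhi : ∀ x, f x ≤ hi) (hf : ∀ x y, R x y → f x = f y) :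
    ∃ L, ∀ x, Tendsto (fun k => (walkMean step ^ k) f x) atTop (𝓝 L) := by
  have hC₀ : 0 < C := Fintype.card_pos.trans_le (hC (Classical.arbitrary α))
  have hadd (k l : ℕ) : (walkMean step ^ (k + l)) f = (walkMean step ^ l) ((walkMean step ^ k) f) :=
    by rw [add_comm, pow_add, Module.End.mul_apply]
  have hinf (k : ℕ) : ∀ x, ⨅ z, (walkMean step ^ k) f z ≤ (walkMean step ^ k) f x :=
    ciInf_le ⟨lo, Set.forall_mem_range.2 (le_walkMean_pow hlo k)⟩
  have hsup (k : ℕ) : ∀ x, (walkMean step ^ k) f x ≤ ⨆ z, (walkMean step ^ k) f z :=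
    le_ciSup ⟨hi, Set.forall_mem_range.2 (walkMean_pow_le hhi k)⟩
  obtain ⟨L, hinf_lim, hsup_lim⟩ := exists_tendsto_of_contracting_bounds
    (lo := fun k => ⨅ z, (walkMean step ^ k) f z) (hi := fun k => ⨆ z, (walkMean step ^ k) f z)
    (monotone_nat_of_le_succ fun k => le_ciInf (hadd k 1 ▸ le_walkMean_pow (hinf k) 1))
    (antitone_nat_of_succ_le fun k => ciSup_le (hadd k 1 ▸ walkMean_pow_le (hsup k) 1))
    (fun k => (hinf k (Classical.arbitrary α)).trans (hsup k _))
    (r := 1 - ((C : ℝ) ^ K)⁻¹) (sub_lt_self 1 (by positivity)) (K := K)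
    fun k => ciSup_sub_ciInf_le fun x y => by
      obtain ⟨x', y', hx, hy, hxy⟩ := hmeet x y
      rw [hadd]
      exact walkMean_pow_sub_le (hinf k) (hsup k) hC hx hy (hR.walkMean_pow_eq hf k hxy)
  exact ⟨L, fun x => tendsto_of_tendsto_of_tendsto_of_le_of_le hinf_lim hsup_lim
    (fun k => hinf k x) fun k => hsup k x⟩

end UniformWalk

/-! ### Attaching a vertex -/

/-- All edges of `g` stay inside `{1, …, n}`. -/
def SupportedOn (g : SimpleGraph ℕ) (n : ℕ) : Prop :=
  ∀ u v, g.Adj u v → u ∈ Icc 1 n ∧ v ∈ Icc 1 n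

/-- The graph obtained from `g` by joining the vertex `n + 1` to the vertices of `S`. -/
def attachVertex (n : ℕ) (g : SimpleGraph ℕ) (S : Finset ℕ) : SimpleGraph ℕ :=
  g ⊔ SimpleGraph.fromRel fun u v => u = n + 1 ∧ v ∈ S

lemma Icc_one_add_one (n : ℕ) : Icc 1 (n + 1) = insert (n + 1) (Icc 1 n) :=
  (insert_Icc_right_eq_Icc_add_one (by lia)).symm

lemma add_one_notMem_Icc (n : ℕ) : n + 1 ∉ Icc 1 n := by simp

section attachVertex

variable {n u v : ℕ} {g g' : SimpleGraph ℕ} {S S' : Finset ℕ}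

lemma SupportedOn.ne_add_one (hg : SupportedOn g n) (h : g.Adj u v) : u ≠ n + 1 ∧ v ≠ n + 1 :=
  ⟨ne_of_mem_of_not_mem (hg u v h).1 (add_one_notMem_Icc n),
    ne_of_mem_of_not_mem (hg u v h).2 (add_one_notMem_Icc n)⟩

lemma attachVertex_adj_of_ne (hu : u ≠ n + 1) (hv : v ≠ n + 1) :
    (attachVertex n g S).Adj u v ↔ g.Adj u v := by
  simp [attachVertex, hu, hv]

variable (hg : SupportedOn g n) (hS : S ⊆ Icc 1 n)

include hg hS

lemma attachVertex_adj_new : (attachVertex n g S).Adj (n + 1) v ↔ v ∈ S := by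
  have hgnew : ¬ g.Adj (n + 1) v := fun h => (hg.ne_add_one h).1 rfl
  have hSnew : n + 1 ∉ S := fun h => add_one_notMem_Icc n (hS h)
  have hv (h : v ∈ S) : n + 1 ≠ v := fun h' => hSnew (h' ▸ h)
  simpa [attachVertex, hgnew, hSnew] using hv

lemma supportedOn_attachVertex : SupportedOn (attachVertex n g S) (n + 1) := by
  simp only [SupportedOn, Icc_one_add_one, mem_insert]
  intro u v h
  by_cases hu : u = n + 1
  · exact ⟨.inl hu, .inr (hS ((attachVertex_adj_new hg hS).1 (hu ▸ h)))⟩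
  by_cases hv : v = n + 1
  · exact ⟨.inr (hS ((attachVertex_adj_new hg hS).1 (hv ▸ h.symm))), .inl hv⟩
  have := hg _ _ ((attachVertex_adj_of_ne hu hv).1 h)
  exact ⟨.inr this.1, .inr this.2⟩

lemma nbrsIn_attachVertex_new : nbrsIn (attachVertex n g S) (n + 1) (n + 1) = S := by
  ext u
  simp only [nbrsIn, mem_filter, attachVertex_adj_new hg hS, and_iff_right_iff_imp, Icc_one_add_one]
  exact fun h => mem_insert_of_mem (hS h)

lemma degIn_attachVertex_new : degIn (attachVertex n g S) (n + 1) (n + 1) = #S :=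
  congrArg card (nbrsIn_attachVertex_new hg hS)

lemma degIn_attachVertex_of_mem (hv : v ∈ Icc 1 n) :
    degIn (attachVertex n g S) (n + 1) v = degIn g n v + if v ∈ S then 1 else 0 := by
  have hold : nbrsIn (attachVertex n g S) n v = nbrsIn g n v :=
    filter_congr fun u hu => attachVertex_adj_of_ne
      (ne_of_mem_of_not_mem hv (add_one_notMem_Icc n))
      (ne_of_mem_of_not_mem hu (add_one_notMem_Icc n))
  simp only [nbrsIn] at hold
  rw [degIn, Icc_one_add_one, filter_insert, hold, SimpleGraph.adj_comm, attachVertex_adj_new hg hS]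
  split_ifs
  · exact card_insert_of_notMem fun h => add_one_notMem_Icc n (mem_filter.1 h).1
  · rfl

lemma attachVertex_inj (hg' : SupportedOn g' n) (hS' : S' ⊆ Icc 1 n)
    (h : attachVertex n g S = attachVertex n g' S') : g = g' ∧ S = S' := by
  refine ⟨?_, by rw [← nbrsIn_attachVertex_new hg hS, h, nbrsIn_attachVertex_new hg' hS']⟩
  have hadj {u v : ℕ} (hu : u ≠ n + 1) (hv : v ≠ n + 1) : g.Adj u v ↔ g'.Adj u v := by
    rw [← attachVertex_adj_of_ne hu hv, h, attachVertex_adj_of_ne hu hv]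
  ext u v
  exact ⟨fun huv => (hadj (hg.ne_add_one huv).1 (hg.ne_add_one huv).2).1 huv,
    fun huv => (hadj (hg'.ne_add_one huv).1 (hg'.ne_add_one huv).2).2 huv⟩

end attachVertex

lemma completeOn_adj {k u v : ℕ} :
    (completeOn k).Adj u v ↔ u ≠ v ∧ u ∈ Icc 1 k ∧ v ∈ Icc 1 k := by
  simp only [completeOn, SimpleGraph.fromRel_adj]
  tauto

lemma degIn_completeOn {k v : ℕ} (hv : v ∈ Icc 1 k) : degIn (completeOn k) k v = k - 1 := by
  have : {u ∈ Icc 1 k | (completeOn k).Adj v u} = (Icc 1 k).erase v := by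
    ext u
    simp only [mem_filter, completeOn_adj, mem_erase, hv, true_and, ne_comm (a := v)]
    tauto
  rw [degIn, this, card_erase_of_mem hv, Nat.card_Icc, Nat.add_sub_cancel]

/-! ### The states of the process -/

/-- A graph on `{1, …, order}` satisfying the invariants of the uniform attachment process. Since
all degrees are at most `2 * m`, the last one says that the open vertices still admit
`m * (m + 1)` further edges. -/
@[ext]
structure UAGraph (m : ℕ) where
  order : ℕ
  graph : SimpleGraph ℕ
  supported : SupportedOn graph order
  le_degIn : ∀ v ∈ Icc 1 order, m ≤ degIn graph order v
  degIn_le : ∀ v ∈ Icc 1 order, degIn graph order v ≤ 2 * m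
  sum_degIn : ∑ v ∈ Icc 1 order, degIn graph order v + m * (m + 1) = 2 * m * order

namespace UAGraph

variable {m : ℕ}

/-- The degree of a vertex. -/
def deg (x : UAGraph m) (v : ℕ) : ℕ := degIn x.graph x.order v

lemma le_deg (x : UAGraph m) {v : ℕ} (hv : v ∈ Icc 1 x.order) : m ≤ x.deg v := x.le_degIn v hv

lemma deg_le (x : UAGraph m) {v : ℕ} (hv : v ∈ Icc 1 x.order) : x.deg v ≤ 2 * m := x.degIn_le v hv

lemma sum_deg (x : UAGraph m) :
    ∑ v ∈ Icc 1 x.order, x.deg v + m * (m + 1) = 2 * m * x.order := x.sum_degIn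

/-- The open vertices, as a finset. -/
def openFinset (x : UAGraph m) : Finset ℕ := {v ∈ Icc 1 x.order | x.deg v < 2 * m}

/-- The admissible neighborhoods of a new vertex. -/
abbrev Move (x : UAGraph m) : Type := powersetCard m x.openFinset

lemma mem_openFinset {x : UAGraph m} {v : ℕ} :
    v ∈ x.openFinset ↔ v ∈ Icc 1 x.order ∧ x.deg v < 2 * m := mem_filter

lemma coe_openFinset (x : UAGraph m) :
    (x.openFinset : Set ℕ) = openVerts m x.order x.graph := Set.ext fun _ => mem_openFinset

lemma openFinset_subset (x : UAGraph m) : x.openFinset ⊆ Icc 1 x.order := filter_subset _ _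

lemma Move.subset_openFinset {x : UAGraph m} (S : x.Move) : S.1 ⊆ x.openFinset :=
  (mem_powersetCard.1 S.2).1

lemma Move.subset_Icc {x : UAGraph m} (S : x.Move) : S.1 ⊆ Icc 1 x.order :=
  S.subset_openFinset.trans x.openFinset_subset

lemma Move.card_eq {x : UAGraph m} (S : x.Move) : #S.1 = m := (mem_powersetCard.1 S.2).2

/-- The state after joining a new vertex to the vertices of `S`. -/
def attach (x : UAGraph m) (S : x.Move) : UAGraph m where
  order := x.order + 1
  graph := attachVertex x.order x.graph S
  supported := supportedOn_attachVertex x.supported S.subset_Icc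
  le_degIn v hv := by
    rw [Icc_one_add_one, mem_insert] at hv
    rcases hv with rfl | hv
    · rw [degIn_attachVertex_new x.supported S.subset_Icc, S.card_eq]
    · rw [degIn_attachVertex_of_mem x.supported S.subset_Icc hv]
      exact (x.le_degIn v hv).trans (Nat.le_add_right _ _)
  degIn_le v hv := by
    rw [Icc_one_add_one, mem_insert] at hv
    rcases hv with rfl | hv
    · rw [degIn_attachVertex_new x.supported S.subset_Icc, S.card_eq]
      lia
    · rw [degIn_attachVertex_of_mem x.supported S.subset_Icc hv]
      split_ifs with h
      · exact (mem_openFinset.1 (S.subset_openFinset h)).2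
      · exact x.degIn_le v hv
  sum_degIn := by
    rw [Icc_one_add_one, sum_insert (add_one_notMem_Icc _),
      degIn_attachVertex_new x.supported S.subset_Icc, S.card_eq,
      sum_congr rfl fun v hv => degIn_attachVertex_of_mem x.supported S.subset_Icc hv,
      sum_add_distrib, sum_ite_mem, inter_eq_right.2 S.subset_Icc, sum_const, S.card_eq,
      smul_eq_mul, mul_one]
    linarith [x.sum_degIn]

section attach

variable {x : UAGraph m} {S : x.Move} {u v : ℕ}

lemma attach_adj_of_le (hu : u ≤ x.order) (hv : v ≤ x.order) :
    (x.attach S).graph.Adj u v ↔ x.graph.Adj u v :=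
  attachVertex_adj_of_ne (by lia) (by lia)

lemma attach_adj_new : (x.attach S).graph.Adj (x.order + 1) v ↔ v ∈ S.1 :=
  attachVertex_adj_new x.supported S.subset_Icc

lemma deg_attach_new : (x.attach S).deg (x.order + 1) = m :=
  (degIn_attachVertex_new x.supported S.subset_Icc).trans S.card_eq

lemma deg_attach_of_mem (hv : v ∈ Icc 1 x.order) :
    (x.attach S).deg v = x.deg v + if v ∈ S.1 then 1 else 0 :=
  degIn_attachVertex_of_mem x.supported S.subset_Icc hv

end attach

lemma order_eq_of_reachIn {k : ℕ} {x y : UAGraph m} (h : ReachIn attach k x y) :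
    y.order = x.order + k := by
  induction h with
  | refl => rfl
  | head S _ ih => rw [ih, attach, add_assoc, add_comm 1]

lemma adj_iff_of_reachIn {k u v : ℕ} {x y : UAGraph m} (h : ReachIn attach k x y)
    (hu : u ≤ x.order) (hv : v ≤ x.order) : y.graph.Adj u v ↔ x.graph.Adj u v := by
  induction h with
  | refl => rfl
  | head S _ ih => rw [ih (Nat.le_succ_of_le hu) (Nat.le_succ_of_le hv), attach_adj_of_le hu hv]

variable (m) in
/-- The initial state `K_{m+1}`. -/
def complete : UAGraph m where
  order := m + 1
  graph := completeOn (m + 1)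
  supported u v h := (completeOn_adj.1 h).2
  le_degIn v hv := (degIn_completeOn hv).ge
  degIn_le v hv := by
    rw [degIn_completeOn hv]
    lia
  sum_degIn := by
    rw [sum_congr rfl fun v hv => degIn_completeOn hv]
    simp only [sum_const, Nat.card_Icc, smul_eq_mul, Nat.add_sub_cancel]
    ring

instance : Nonempty (UAGraph m) := ⟨complete m⟩

end UAGraph

/-! ### Closing all open vertices -/

lemma exists_balanced_subset {ι : Type*} {m k : ℕ} {O : Finset ι} {d : ι → ℕ}
    (hd : ∀ v ∈ O, d v ≤ k + 1) (hsum : ∑ v ∈ O, d v = m * (k + 1)) :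
    ∃ S ⊆ O, #S = m ∧ (∀ v ∈ S, 0 < d v) ∧ ∀ v ∈ O, v ∉ S → d v ≤ k := by
  have hmax : #{v ∈ O | d v = k + 1} ≤ m := by
    refine Nat.le_of_mul_le_mul_right ?_ k.succ_pos
    calc #{v ∈ O | d v = k + 1} * (k + 1) = ∑ v ∈ O with d v = k + 1, d v :=
          (sum_const_nat fun v hv => (mem_filter.1 hv).2).symm
      _ ≤ ∑ v ∈ O, d v := sum_le_sum_of_subset (filter_subset _ _)
      _ = m * (k + 1) := hsum
  have hpos : m ≤ #{v ∈ O | d v ≠ 0} := by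
    refine Nat.le_of_mul_le_mul_right ?_ k.succ_pos
    calc m * (k + 1) = ∑ v ∈ O with d v ≠ 0, d v := by rw [sum_filter_ne_zero, hsum]
      _ ≤ #{v ∈ O | d v ≠ 0} * (k + 1) :=
          sum_le_card_nsmul _ _ _ fun v hv => hd v (mem_filter.1 hv).1
  have hsub : {v ∈ O | d v = k + 1} ⊆ {v ∈ O | d v ≠ 0} :=
    monotone_filter_right O fun v _ h => h.trans_ne k.succ_ne_zero
  obtain ⟨S, hmaxS, hSpos, hS⟩ := exists_subsuperset_card_eq hsub hmax hpos
  refine ⟨S, hSpos.trans (filter_subset _ _), hS,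
    fun v hv => Nat.pos_of_ne_zero (mem_filter.1 (hSpos hv)).2, fun v hv hvS => ?_⟩
  exact Nat.le_of_lt_succ <| (hd v hv).lt_of_ne fun h => hvS (hmaxS (mem_filter.2 ⟨hv, h⟩))

namespace UAGraph

variable {m k u v : ℕ} {x y : UAGraph m} {O : Finset ℕ}

/-- The attachment step restricted to the moves contained in `O`. -/
def attachWithin (O : Finset ℕ) (x : UAGraph m) (S : {S : x.Move // S.1 ⊆ O}) : UAGraph m :=
  x.attach S.1

lemma reachIn_of_reachIn_within (h : ReachIn (attachWithin O) k x y) : ReachIn attach k x y := by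
  induction h with
  | refl x => exact .refl x
  | head S _ ih => exact .head S.1 ih

lemma Icc_subset_Icc_attach (S : x.Move) : Icc 1 x.order ⊆ Icc 1 (x.attach S).order :=
  Icc_subset_Icc_right x.order.le_succ

lemma deg_eq_of_reachIn_within (h : ReachIn (attachWithin O) k x y) (hv : v ∈ Icc 1 x.order)
    (hvO : v ∉ O) : y.deg v = x.deg v := by
  induction h with
  | refl => rfl
  | head S _ ih =>
    rw [ih (Icc_subset_Icc_attach S.1 hv), attachWithin, deg_attach_of_mem hv,
      if_neg (notMem_mono S.2 hvO), add_zero]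

lemma deg_new_of_reachIn_within (h : ReachIn (attachWithin O) k x y) (hO : O ⊆ Icc 1 x.order)
    (hv : v ∈ Ioc x.order y.order) : y.deg v = m := by
  induction h with
  | refl => simp at hv
  | @head k x y S h ih =>
    rcases eq_or_ne v (x.order + 1) with rfl | hvn
    · rw [deg_eq_of_reachIn_within (v := x.order + 1) h (mem_Icc.2 ⟨Nat.le_add_left 1 _, le_rfl⟩)
        fun h => add_one_notMem_Icc _ (hO h)]
      exact deg_attach_new
    · exact ih (hO.trans (Icc_subset_Icc_attach S.1))
        (mem_Ioc.2 ⟨(Nat.succ_le_of_lt (mem_Ioc.1 hv).1).lt_of_ne' hvn, (mem_Ioc.1 hv).2⟩)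

lemma mem_of_adj_new_of_reachIn_within (h : ReachIn (attachWithin O) k x y)
    (hO : O ⊆ Icc 1 x.order) (hu : x.order < u) (huv : y.graph.Adj u v) : v ∈ O := by
  induction h generalizing u v with
  | refl x => exact absurd hu (mem_Icc.1 (x.supported u v huv).1).2.not_gt
  | @head k x y S h ih =>
    replace ih {u v : ℕ} := @ih u v (hO.trans (Icc_subset_Icc_attach S.1))
    obtain rfl | hu := eq_or_lt_of_le' (Nat.succ_le_of_lt hu)
    · rcases le_or_gt v (x.order + 1) with hv | hv
      · exact S.2 (attach_adj_new.1
          ((adj_iff_of_reachIn (reachIn_of_reachIn_within h) le_rfl hv).1 huv))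
      · exact absurd (hO (ih hv huv.symm)) (add_one_notMem_Icc _)
    · exact ih hu huv

lemma exists_reachIn_within (hO : O ⊆ Icc 1 x.order) (hk : ∀ v ∈ O, 2 * m - x.deg v ≤ k)
    (hsum : ∑ v ∈ O, (2 * m - x.deg v) = m * k) :
    ∃ y, ReachIn (attachWithin O) k x y ∧ ∀ v ∈ O, y.deg v = 2 * m := by
  induction k generalizing x with
  | zero =>
    exact ⟨x, .refl x, fun v hv => (x.deg_le (hO hv)).antisymm
      (Nat.le_of_sub_eq_zero (Nat.le_zero.1 (hk v hv)))⟩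
  | succ k ih =>
    obtain ⟨S, hSO, hSm, hSpos, hSk⟩ := exists_balanced_subset hk hsum
    have hS : S ∈ powersetCard m x.openFinset := mem_powersetCard.2
      ⟨fun v hv => mem_openFinset.2 ⟨hO (hSO hv), Nat.lt_of_sub_pos (hSpos v hv)⟩, hSm⟩
    have hdeg (v) (hv : v ∈ O) :
        2 * m - x.deg v = 2 * m - (x.attach ⟨S, hS⟩).deg v + if v ∈ S then 1 else 0 := by
      rw [deg_attach_of_mem (hO hv)]
      have := hSpos v
      split_ifs <;> grind
    obtain ⟨y, hreach, hy⟩ := ih (x := x.attach ⟨S, hS⟩)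
      (hO.trans (Icc_subset_Icc_attach _))
      (fun v hv => by
        have := hdeg v hv
        have := hk v hv
        have := hSk v hv
        split_ifs at * <;> grind)
      (by
        rw [sum_congr rfl hdeg, sum_add_distrib, sum_ite_mem, inter_eq_right.2 hSO, sum_const,
          hSm, smul_eq_mul, mul_one] at hsum
        linarith)
    exact ⟨y, .head ⟨⟨S, hS⟩, hSO⟩ hreach, hy⟩

lemma sum_deficiency (x : UAGraph m) :
    ∑ v ∈ x.openFinset, (2 * m - x.deg v) = m * (m + 1) := by
  have hopen : ∑ v ∈ x.openFinset, (2 * m - x.deg v) = ∑ v ∈ Icc 1 x.order, (2 * m - x.deg v) :=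
    sum_subset x.openFinset_subset fun v hv hvo =>
      Nat.sub_eq_zero_of_le (not_lt.1 fun h => hvo (mem_openFinset.2 ⟨hv, h⟩))
  have hall : ∑ v ∈ Icc 1 x.order, (2 * m - x.deg v) + ∑ v ∈ Icc 1 x.order, x.deg v =
      2 * m * x.order := by
    rw [← sum_add_distrib, sum_congr rfl fun v hv => Nat.sub_add_cancel (x.deg_le hv)]
    simp [mul_comm]
  linarith [x.sum_deg]

/-- The state `y` arises from `x` by adding `m + 1` vertices, joined only to open vertices of `x`,
in such a way that all open vertices of `x` become closed. -/
structure IsFilling (x y : UAGraph m) : Prop where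
  reachIn_within : ReachIn (attachWithin x.openFinset) (m + 1) x y
  deg_eq : ∀ v ∈ x.openFinset, y.deg v = 2 * m

lemma exists_isFilling (x : UAGraph m) : ∃ y, IsFilling x y := by
  obtain ⟨y, hreach, hy⟩ := exists_reachIn_within (k := m + 1) x.openFinset_subset
    (fun v hv => by
      have := x.le_deg (x.openFinset_subset hv)
      lia) x.sum_deficiency
  exact ⟨y, hreach, hy⟩

instance (x : UAGraph m) : Nonempty x.Move := by
  obtain ⟨y, hy⟩ := x.exists_isFilling
  obtain - | ⟨S, -⟩ := hy.reachIn_within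
  exact ⟨S.1⟩

lemma card_move (x : UAGraph m) : Fintype.card x.Move = (#x.openFinset).choose m := by
  rw [Fintype.card_coe, card_powersetCard]

lemma card_move_le (x : UAGraph m) : Fintype.card x.Move ≤ (m * (m + 1)).choose m := by
  rw [card_move, ← x.sum_deficiency, card_eq_sum_ones]
  exact Nat.choose_le_choose m (sum_le_sum fun v hv => Nat.sub_pos_of_lt (mem_openFinset.1 hv).2)

namespace IsFilling

lemma reachIn (h : IsFilling x y) : ReachIn attach (m + 1) x y :=
  reachIn_of_reachIn_within h.reachIn_within

lemma openFinset_subset (h : IsFilling x y) : y.openFinset ⊆ Ioc x.order y.order := by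
  intro v hv
  obtain ⟨hvy, hvdeg⟩ := mem_openFinset.1 hv
  refine mem_Ioc.2 ⟨not_le.1 fun hvn => ?_, (mem_Icc.1 hvy).2⟩
  have hvx : v ∈ Icc 1 x.order := mem_Icc.2 ⟨(mem_Icc.1 hvy).1, hvn⟩
  by_cases hvo : v ∈ x.openFinset
  · exact hvdeg.ne (h.deg_eq v hvo)
  · rw [deg_eq_of_reachIn_within h.reachIn_within hvx hvo] at hvdeg
    exact hvo (mem_openFinset.2 ⟨hvx, hvdeg⟩)

lemma deg_new (h : IsFilling x y) (hv : v ∈ Ioc x.order y.order) : y.deg v = m :=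
  deg_new_of_reachIn_within h.reachIn_within x.openFinset_subset hv

lemma mem_openFinset_of_adj_new (h : IsFilling x y) (hu : x.order < u) (huv : y.graph.Adj u v) :
    v ∈ x.openFinset :=
  mem_of_adj_new_of_reachIn_within h.reachIn_within x.openFinset_subset hu huv

end IsFilling

end UAGraph

/-! ### Neighborhoods of the open vertices -/

section openNbhd

variable {m n b u w : ℕ} {g : SimpleGraph ℕ}

lemma openVerts_subset_openNbhd : openVerts m n g ⊆ openNbhd m n b g :=
  fun v hv => ⟨v, hv, .nil, Nat.zero_le _⟩

lemma openNbhd_zero : openNbhd m n 0 g = openVerts m n g := by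
  refine Set.Subset.antisymm ?_ openVerts_subset_openNbhd
  rintro u ⟨v, hv, p, hp⟩
  exact p.eq_of_length_eq_zero (Nat.le_zero.1 hp) ▸ hv

lemma openNbhd_mono {c : ℕ} (h : b ≤ c) : openNbhd m n b g ⊆ openNbhd m n c g :=
  fun _ ⟨v, hv, p, hp⟩ => ⟨v, hv, p, hp.trans h⟩

lemma mem_openNbhd_succ_of_adj (hw : w ∈ openNbhd m n b g) (h : g.Adj w u) :
    u ∈ openNbhd m n (b + 1) g := by
  obtain ⟨v, hv, p, hp⟩ := hw
  exact ⟨v, hv, p.concat h, by simpa using hp⟩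

lemma mem_openNbhd_succ :
    u ∈ openNbhd m n (b + 1) g ↔ u ∈ openNbhd m n b g ∨ ∃ w ∈ openNbhd m n b g, g.Adj w u := by
  constructor
  · rintro ⟨v, hv, p, hp⟩
    cases p using SimpleGraph.Walk.concatRec with
    | Hnil => exact .inl ⟨u, hv, .nil, Nat.zero_le _⟩
    | Hconcat p h => exact .inr ⟨_, ⟨v, hv, p, by simpa using hp⟩, h⟩
  · rintro (h | ⟨w, hw, h⟩)
    · exact openNbhd_mono b.le_succ h
    · exact mem_openNbhd_succ_of_adj hw h

/-- Paths of `g'` from its open vertices leave the set `N` of new vertices only through the open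
vertices of `g`, so the detour through `N` brings nothing closer than it was in `g`. -/
lemma openNbhd_add_subset {n' c : ℕ} {g' : SimpleGraph ℕ} {N : Set ℕ}
    (hc : openNbhd m n' c g' ⊆ N ∪ openVerts m n g)
    (hadj : ∀ w u, g'.Adj w u → u ∈ N ∨ u ∈ openVerts m n g ∨ w ∉ N ∧ g.Adj w u) :
    openNbhd m n' (c + b) g' ⊆ N ∪ openNbhd m n b g := by
  induction b with
  | zero => rwa [openNbhd_zero]
  | succ b ih =>
    intro u hu
    rcases mem_openNbhd_succ.1 hu with hu | ⟨w, hw, hwu⟩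
    · exact Set.union_subset_union_right _ (openNbhd_mono b.le_succ) (ih hu)
    rcases hadj w u hwu with hu | hu | ⟨hwN, hwu⟩
    · exact .inl hu
    · exact .inr (openVerts_subset_openNbhd hu)
    · exact .inr (mem_openNbhd_succ_of_adj ((ih hw).resolve_left hwN) hwu)

end openNbhd

namespace UAGraph

variable {m b : ℕ} {x y : UAGraph m}

/-- The `b`-neighborhood of the open vertices. -/
abbrev nbhd (x : UAGraph m) (b : ℕ) : Set ℕ := openNbhd m x.order b x.graph

lemma nbhd_zero : x.nbhd 0 = x.openFinset := openNbhd_zero.trans x.coe_openFinset.symm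

lemma openFinset_subset_nbhd : ↑x.openFinset ⊆ x.nbhd b :=
  x.coe_openFinset ▸ openVerts_subset_openNbhd

lemma openFinset_attach_subset {S : x.Move} :
    (x.attach S).openFinset ⊆ insert (x.order + 1) x.openFinset := by
  intro v hv
  obtain ⟨hvx, hvdeg⟩ := mem_openFinset.1 hv
  rw [attach, Icc_one_add_one, mem_insert] at hvx
  refine mem_insert.2 (hvx.imp_right fun hvx => mem_openFinset.2 ⟨hvx, ?_⟩)
  rw [deg_attach_of_mem hvx] at hvdeg
  exact (Nat.le_add_right _ _).trans_lt hvdeg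

lemma nbhd_attach_subset {S : x.Move} :
    (x.attach S).nbhd b ⊆ insert (x.order + 1) (x.nbhd b) := by
  suffices (x.attach S).nbhd (0 + b) ⊆ {x.order + 1} ∪ x.nbhd b by rwa [zero_add] at this
  refine openNbhd_add_subset ?_ fun w u hwu => ?_
  · have := coe_subset.2 (openFinset_attach_subset (S := S))
    rwa [coe_insert, ← nbhd_zero, coe_openFinset] at this
  · by_cases hu : u = x.order + 1
    · exact .inl hu
    by_cases hw : w = x.order + 1
    · subst hw
      rw [← coe_openFinset]
      exact .inr (.inl (S.subset_openFinset (attach_adj_new.1 hwu)))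
    · exact .inr (.inr ⟨hw, (attachVertex_adj_of_ne hw hu).1 hwu⟩)

lemma IsFilling.nbhd_succ_subset (h : IsFilling x y) :
    y.nbhd (b + 1) ⊆ ↑(Ioc x.order y.order) ∪ x.nbhd b := by
  have hnew {w u : ℕ} (hwu : y.graph.Adj w u) (hw : x.order < w) :
      u ∈ openVerts m x.order x.graph := x.coe_openFinset ▸ h.mem_openFinset_of_adj_new hw hwu
  rw [add_comm, nbhd, nbhd]
  refine openNbhd_add_subset (fun u hu => ?_) fun w u hwu => ?_
  · have hopen {w : ℕ} (hw : w ∈ y.nbhd 0) : w ∈ Ioc x.order y.order :=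
      h.openFinset_subset (mem_coe.1 (nbhd_zero ▸ hw))
    rcases mem_openNbhd_succ.1 hu with hu | ⟨w, hw, hwu⟩
    · exact .inl (hopen hu)
    · exact .inr (hnew hwu (mem_Ioc.1 (hopen hw)).1)
  · rcases lt_or_ge x.order u with hu | hu
    · exact .inl (mem_Ioc.2 ⟨hu, (mem_Icc.1 (y.supported _ _ hwu).2).2⟩)
    rcases lt_or_ge x.order w with hw | hw
    · exact .inr (.inl (hnew hwu hw))
    · exact .inr (.inr ⟨fun hwN => (mem_Ioc.1 hwN).1.not_ge hw,
        (adj_iff_of_reachIn h.reachIn hw hu).1 hwu⟩)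

end UAGraph

/-! ### Local isomorphisms -/

namespace UAGraph

/-- The permutation `φ` identifies a set `A` of vertices containing the `b`-neighborhood of the open
vertices of `x` with a set of vertices of `y` that contains all open vertices, respecting
adjacency and degrees. Only the values of `φ` on `A` matter. -/
structure LocalIso {m : ℕ} (b : ℕ) (x y : UAGraph m) (φ : Equiv.Perm ℕ) (A : Set ℕ) : Prop where
  mem_source : ∀ u ∈ A, u ∈ Icc 1 x.order
  mem_target : ∀ u ∈ A, φ u ∈ Icc 1 y.order
  adj_iff : ∀ u ∈ A, ∀ v ∈ A, (y.graph.Adj (φ u) (φ v) ↔ x.graph.Adj u v)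
  deg_eq : ∀ u ∈ A, y.deg (φ u) = x.deg u
  symm_mem : ∀ u ∈ y.openFinset, φ.symm u ∈ A
  nbhd_subset : x.nbhd b ⊆ A

variable {m b : ℕ} {x y x' y' : UAGraph m} {φ : Equiv.Perm ℕ} {A : Set ℕ}

namespace LocalIso

lemma mem_openFinset_iff (h : LocalIso b x y φ A) (u : ℕ) :
    φ u ∈ y.openFinset ↔ u ∈ x.openFinset := by
  have hA (hu : u ∈ A) : φ u ∈ y.openFinset ↔ u ∈ x.openFinset := by
    simp only [mem_openFinset, h.mem_source u hu, h.mem_target u hu, h.deg_eq u hu]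
  refine ⟨fun hu => (hA ?_).1 hu, fun hu => (hA ?_).2 hu⟩
  · simpa using h.symm_mem _ hu
  · exact h.nbhd_subset (openFinset_subset_nbhd hu)

lemma adj_iff_of_nbrs_mem (h : LocalIso b x y φ A) {w : ℕ} (hw : w ∈ A)
    (hnbrs : ∀ v, x.graph.Adj w v → v ∈ A) (u : ℕ) :
    y.graph.Adj (φ w) (φ u) ↔ x.graph.Adj w u := by
  refine ⟨fun hadj => ?_, fun hadj => (h.adj_iff w hw u (hnbrs u hadj)).2 hadj⟩
  have hsub : (nbrsIn x.graph x.order w).map φ.toEmbedding ⊆ nbrsIn y.graph y.order (φ w) := by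
    intro _ hφv
    obtain ⟨v, hv, rfl⟩ := mem_map.1 hφv
    have hwv := (mem_filter.1 hv).2
    have hvA := hnbrs v hwv
    exact mem_filter.2 ⟨h.mem_target v hvA, (h.adj_iff w hw v hvA).2 hwv⟩
  have heq := eq_of_subset_of_card_le hsub (by rw [card_map]; exact (h.deg_eq w hw).le)
  have hu : φ u ∈ nbrsIn y.graph y.order (φ w) := mem_filter.2 ⟨(y.supported _ _ hadj).2, hadj⟩
  rw [← heq] at hu
  exact (mem_filter.1 ((mem_map' φ.toEmbedding).1 hu)).2

lemma mem_nbhd_iff (h : LocalIso b x y φ A) {c : ℕ} (hc : c ≤ b) (u : ℕ) :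
    φ u ∈ y.nbhd c ↔ u ∈ x.nbhd c := by
  induction c generalizing u with
  | zero =>
    rw [nbhd_zero, nbhd_zero]
    exact h.mem_openFinset_iff u
  | succ c ih =>
    replace ih := ih (Nat.le_of_succ_le hc)
    have hadj (w) (hw : w ∈ x.nbhd c) : y.graph.Adj (φ w) (φ u) ↔ x.graph.Adj w u :=
      h.adj_iff_of_nbrs_mem (h.nbhd_subset (openNbhd_mono (Nat.le_of_succ_le hc) hw))
        (fun v hv => h.nbhd_subset (openNbhd_mono hc (mem_openNbhd_succ_of_adj hw hv))) u
    calc φ u ∈ y.nbhd (c + 1) ↔ φ u ∈ y.nbhd c ∨ ∃ w ∈ y.nbhd c, y.graph.Adj w (φ u) :=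
          mem_openNbhd_succ
      _ ↔ u ∈ x.nbhd c ∨ ∃ w ∈ x.nbhd c, x.graph.Adj w u := by
          rw [φ.surjective.exists]
          simp only [ih]
          exact or_congr_right (exists_congr fun w => and_congr_right (hadj w))
      _ ↔ u ∈ x.nbhd (c + 1) := mem_openNbhd_succ.symm

/-- The isomorphism between the neighborhoods of the open vertices. -/
def nbhdIso (h : LocalIso b x y φ A) :
    x.graph.induce (x.nbhd b) ≃g y.graph.induce (y.nbhd b) where
  toEquiv := φ.subtypeEquiv fun u => (h.mem_nbhd_iff le_rfl u).symm
  map_rel_iff' {u v} := h.adj_iff u (h.nbhd_subset u.2) v (h.nbhd_subset v.2)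

/-- The bijection between the moves induced by a local isomorphism. -/
def moveEquiv (h : LocalIso b x y φ A) : x.Move ≃ y.Move :=
  φ.finsetCongr.subtypeEquiv fun S => by
    have hmap : y.openFinset = x.openFinset.map φ.toEmbedding := by
      ext u
      rw [mem_map_equiv, ← h.mem_openFinset_iff, φ.apply_symm_apply]
    rw [mem_powersetCard, mem_powersetCard, Equiv.finsetCongr_apply, hmap, map_subset_map, card_map]

lemma mem_moveEquiv (h : LocalIso b x y φ A) (S : x.Move) (u : ℕ) :
    φ u ∈ (h.moveEquiv S).1 ↔ u ∈ S.1 := mem_map' φ.toEmbedding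

lemma exists_attach (h : LocalIso b x y φ A) (S : x.Move) :
    ∃ ψ, LocalIso b (x.attach S) (y.attach (h.moveEquiv S)) ψ (insert (x.order + 1) A) := by
  have hx (u) (hu : u ∈ A) : u ≠ x.order + 1 :=
    ne_of_mem_of_not_mem (h.mem_source u hu) (add_one_notMem_Icc _)
  have hy (u) (hu : u ∈ A) : φ u ≠ y.order + 1 :=
    ne_of_mem_of_not_mem (h.mem_target u hu) (add_one_notMem_Icc _)
  let ψ := φ.trans (Equiv.swap (φ (x.order + 1)) (y.order + 1))
  have hψnew : ψ (x.order + 1) = y.order + 1 := Equiv.swap_apply_left _ _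
  have hψ (u) (hu : u ∈ A) : ψ u = φ u :=
    Equiv.swap_apply_of_ne_of_ne (fun h => hx u hu (φ.injective h)) (hy u hu)
  refine ⟨ψ, ?_, ?_, ?_, ?_, ?_, ?_⟩
  · simp only [attach, Icc_one_add_one, mem_insert, Set.mem_insert_iff]
    exact fun u hu => hu.imp_right (h.mem_source u)
  · simp only [attach, Icc_one_add_one, mem_insert]
    rintro u (rfl | hu)
    · exact .inl hψnew
    · exact .inr (hψ u hu ▸ h.mem_target u hu)
  · rintro u (rfl | hu) v (rfl | hv)
    · simp
    · rw [hψnew, hψ v hv, attach_adj_new, attach_adj_new, h.mem_moveEquiv]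
    · rw [hψnew, hψ u hu, SimpleGraph.adj_comm, attach_adj_new, SimpleGraph.adj_comm,
        attach_adj_new, h.mem_moveEquiv]
    · rw [hψ u hu, hψ v hv, attach, attach, attachVertex_adj_of_ne (hy u hu) (hy v hv),
        attachVertex_adj_of_ne (hx u hu) (hx v hv), h.adj_iff u hu v hv]
  · rintro u (rfl | hu)
    · rw [hψnew, deg_attach_new, deg_attach_new]
    · rw [hψ u hu, deg_attach_of_mem (h.mem_source u hu), deg_attach_of_mem (h.mem_target u hu),
        h.deg_eq u hu, if_congr (h.mem_moveEquiv S u) rfl rfl]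
  · intro u hu
    rw [Set.mem_insert_iff, ψ.symm_apply_eq, hψnew]
    refine (mem_insert.1 (openFinset_attach_subset hu)).imp_right fun hu => ?_
    have hu_symm := h.symm_mem u hu
    rwa [show ψ.symm u = φ.symm u from ψ.symm_apply_eq.2 (by simp [hψ _ hu_symm])]
  · exact nbhd_attach_subset.trans (Set.insert_subset_insert h.nbhd_subset)

lemma exists_reachIn (h : LocalIso b x y φ A) {k : ℕ} (hx : ReachIn attach k x x') :
    ∃ y' ψ, ReachIn attach k y y' ∧ LocalIso b x' y' ψ (↑(Ioc x.order x'.order) ∪ A) := by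
  induction hx generalizing y φ A with
  | refl x => exact ⟨y, φ, .refl y, by simpa using h⟩
  | @head k x x' S hx ih =>
    obtain ⟨ψ, hψ⟩ := h.exists_attach S
    obtain ⟨y', ψ', hy, hψ'⟩ := ih hψ
    refine ⟨y', ψ', .head _ hy, ?_⟩
    have hlt : x.order < x'.order :=
      Nat.lt_of_succ_le ((order_eq_of_reachIn hx).ge.trans' le_self_add)
    rwa [Set.union_insert, ← Set.insert_union, attach, ← coe_insert,
      insert_Ioc_add_one_left_eq_Ioc hlt] at hψ'

end LocalIso

lemma exists_perm_shift (n n' k : ℕ) :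
    ∃ φ : Equiv.Perm ℕ, ∀ u ∈ Ioc n (n + k), φ u + n = u + n' := by
  have hinj : Function.Injective fun u : Ioc n (n + k) => (u : ℕ) - n + n' := by
    rintro ⟨u, hu⟩ ⟨v, hv⟩ huv
    rw [mem_Ioc] at hu hv
    simp only [Subtype.mk.injEq] at huv ⊢
    lia
  obtain ⟨φ, hφ⟩ := Equiv.Perm.exists_extending_pair _ _ Subtype.val_injective hinj
  refine ⟨φ, fun u hu => ?_⟩
  rw [hφ ⟨u, hu⟩]
  have := (mem_Ioc.1 hu).1
  lia

lemma IsFilling.not_adj_new {u v : ℕ} (h : IsFilling x x') (hu : x.order < u)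
    (hv : x.order < v) : ¬ x'.graph.Adj u v := fun huv =>
  (mem_Icc.1 (x.openFinset_subset (h.mem_openFinset_of_adj_new hu huv))).2.not_gt hv

lemma IsFilling.exists_localIso (hx : IsFilling x x') (hy : IsFilling y y') :
    ∃ φ, LocalIso 0 x' y' φ ↑(Ioc x.order x'.order) := by
  have hx_order : x'.order = x.order + (m + 1) := order_eq_of_reachIn hx.reachIn
  have hy_order : y'.order = y.order + (m + 1) := order_eq_of_reachIn hy.reachIn
  obtain ⟨φ, hφ⟩ := exists_perm_shift x.order y.order (m + 1)
  rw [← hx_order] at hφ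
  have hmem (u) (hu : u ∈ Ioc x.order x'.order) : φ u ∈ Ioc y.order y'.order := by
    have := hφ u hu
    rw [mem_Ioc] at *
    lia
  have hlt {u n k : ℕ} (hu : u ∈ Ioc n k) : n < u := (mem_Ioc.1 hu).1
  have hIcc {u n k : ℕ} (hu : u ∈ Ioc n k) : u ∈ Icc 1 k :=
    mem_Icc.2 ⟨Nat.one_le_of_lt (hlt hu), (mem_Ioc.1 hu).2⟩
  refine ⟨φ, fun u hu => hIcc hu, fun u hu => hIcc (hmem u hu), fun u hu v hv => ?_,
    fun u hu => ?_, fun u hu => ?_, ?_⟩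
  · exact iff_of_false (hy.not_adj_new (hlt (hmem u hu)) (hlt (hmem v hv)))
      (hx.not_adj_new (hlt hu) (hlt hv))
  · rw [hx.deg_new hu, hy.deg_new (hmem u hu)]
  · have hu' := mem_Ioc.1 (hy.openFinset_subset hu)
    have hw : u - y.order + x.order ∈ Ioc x.order x'.order := mem_Ioc.2 (by lia)
    rwa [φ.symm_apply_eq.2 (show u = φ (u - y.order + x.order) by have := hφ _ hw; lia)]
  · rw [nbhd_zero]
    exact_mod_cast hx.openFinset_subset

lemma exists_reachIn_localIso (b : ℕ) (x y : UAGraph m) :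
    ∃ x' y' φ A, ReachIn attach ((b + 1) * (m + 1)) x x' ∧
      ReachIn attach ((b + 1) * (m + 1)) y y' ∧ LocalIso b x' y' φ A := by
  induction b with
  | zero =>
    obtain ⟨x', hx⟩ := x.exists_isFilling
    obtain ⟨y', hy⟩ := y.exists_isFilling
    obtain ⟨φ, hφ⟩ := hx.exists_localIso hy
    rw [zero_add, one_mul]
    exact ⟨x', y', φ, _, hx.reachIn, hy.reachIn, hφ⟩
  | succ b ih =>
    obtain ⟨x', y', φ, A, hx, hy, hφ⟩ := ih
    obtain ⟨x'', hx'⟩ := x'.exists_isFilling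
    obtain ⟨y'', ψ, hy', hψ⟩ := hφ.exists_reachIn hx'.reachIn
    rw [Nat.succ_mul]
    refine ⟨x'', y'', ψ, _, hx.trans hx'.reachIn, hy.trans hy', { hψ with nbhd_subset := ?_ }⟩
    exact hx'.nbhd_succ_subset.trans (Set.union_subset_union_right _ hφ.nbhd_subset)

/-- Some local isomorphism of radius `b` relates the two states. -/
def LocallyIso (b : ℕ) (x y : UAGraph m) : Prop := ∃ φ A, LocalIso b x y φ A

lemma isBisimulation_locallyIso (b : ℕ) : IsBisimulation attach (LocallyIso (m := m) b) := by
  rintro x y ⟨φ, A, h⟩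
  refine ⟨h.moveEquiv, fun S => ?_⟩
  obtain ⟨ψ, hψ⟩ := h.exists_attach S
  exact ⟨ψ, _, hψ⟩

end UAGraph

/-! ### The law of the process -/

lemma finite_setOf_supportedOn (n : ℕ) : {g | SupportedOn g n}.Finite := by
  refine (Set.finite_range fun g : SimpleGraph (Set.Icc 1 n) => g.spanningCoe).subset ?_
  intro g hg
  refine ⟨g.induce (Set.Icc 1 n), (g.spanningCoe_induce_eq_self _).2 ?_⟩
  rintro u ⟨v, huv⟩
  exact mem_Icc.1 (hg u v huv).1

namespace UAGraph

variable {m : ℕ}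

lemma finite_setOf_order_eq (m n : ℕ) : {x : UAGraph m | x.order = n}.Finite := by
  refine (finite_setOf_supportedOn n).of_injOn (f := graph) ?_ ?_
  · rintro x rfl
    exact x.supported
  · exact fun x hx y hy hxy => UAGraph.ext (hx.trans hy.symm) hxy

/-- The states of order `n`. -/
def statesOfOrder (m n : ℕ) : Finset (UAGraph m) := (finite_setOf_order_eq m n).toFinset

lemma mem_statesOfOrder {n : ℕ} {x : UAGraph m} : x ∈ statesOfOrder m n ↔ x.order = n :=
  Set.Finite.mem_toFinset _

lemma attach_injective :
    Function.Injective fun p : (x : UAGraph m) × x.Move => p.1.attach p.2 := by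
  rintro ⟨x, S⟩ ⟨y, T⟩ h
  have horder : x.order = y.order := Nat.succ_injective (congrArg order h)
  have hgraph : attachVertex x.order x.graph S = attachVertex y.order y.graph T := congrArg graph h
  rw [← horder] at hgraph
  obtain ⟨hxy, hST⟩ := attachVertex_inj x.supported S.subset_Icc (horder ▸ y.supported)
    (horder ▸ T.subset_Icc) hgraph
  obtain rfl := UAGraph.ext horder hxy
  obtain rfl := Subtype.ext hST
  rfl

lemma exists_eq_attach_of_isUAStep {x : UAGraph m} {g : SimpleGraph ℕ}
    (h : IsUAStep m x.order x.graph g) : ∃ S : x.Move, g = (x.attach S).graph := by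
  obtain ⟨hsupp, hold, hcard, hopen⟩ := h
  have hnew (v) : v ∈ nbrsIn g (x.order + 1) (x.order + 1) ↔ g.Adj (x.order + 1) v :=
    mem_filter.trans (and_iff_right_of_imp fun hv => (hsupp _ _ hv).2)
  let S : x.Move := ⟨nbrsIn g (x.order + 1) (x.order + 1), mem_powersetCard.2
    ⟨fun v hv => mem_openFinset.2 (hopen v ((hnew v).1 hv)), hcard⟩⟩
  have hadj (v) : g.Adj (x.order + 1) v ↔ (x.attach S).graph.Adj (x.order + 1) v :=
    (hnew v).symm.trans (attach_adj_new (S := S)).symm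
  refine ⟨S, ?_⟩
  ext u v
  by_cases hu : u = x.order + 1
  · rw [hu, hadj]
  by_cases hv : v = x.order + 1
  · rw [hv, SimpleGraph.adj_comm, hadj, SimpleGraph.adj_comm]
  · exact (hold u v hu hv).trans (attachVertex_adj_of_ne hu hv).symm

end UAGraph

namespace UAProcess

open UAGraph

variable {m n : ℕ} {Ω : Type} [MeasurableSpace Ω] {P : Measure Ω} [IsProbabilityMeasure P]

lemma ae_eq_complete (X : UAProcess m P) : ∀ᵐ ω ∂P, X.G (m + 1) ω = (complete m).graph :=
  (mem_ae_iff_prob_eq_one (X.meas _ _)).2 X.init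

lemma ae_exists_attach (X : UAProcess m P) (hn : m + 1 ≤ n)
    (hstate : ∀ᵐ ω ∂P, ∃ x : UAGraph m, x.order = n ∧ X.G n ω = x.graph) :
    ∀ᵐ ω ∂P, ∃ (x : UAGraph m) (S : x.Move),
      x.order = n ∧ X.G n ω = x.graph ∧ X.G (n + 1) ω = (x.attach S).graph := by
  set s := {ω | ∃ (x : UAGraph m) (S : x.Move),
      x.order = n ∧ X.G n ω = x.graph ∧ X.G (n + 1) ω = (x.attach S).graph} with hs
  have hmeas : MeasurableSet s := by
    have : s = ⋃ x ∈ statesOfOrder m n, ⋃ S : x.Move,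
        {ω | X.G n ω = x.graph} ∩ {ω | X.G (n + 1) ω = (x.attach S).graph} := by
      ext ω
      simp only [hs, Set.mem_ofPred_eq, Set.mem_iUnion, Set.mem_inter_iff, mem_statesOfOrder,
        exists_prop, exists_and_left]
    rw [this]
    exact Finset.measurableSet_biUnion _ fun x _ => .iUnion fun S =>
      (X.meas n _).inter (X.meas (n + 1) _)
  refine (mem_ae_iff_prob_eq_one hmeas).2 (prob_le_one.antisymm ?_)
  rw [← X.stepAdm n hn]
  refine measure_mono_ae ?_
  filter_upwards [hstate] with ω hω hstep
  obtain ⟨x, rfl, hx⟩ := hω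
  have hstep : IsUAStep m x.order x.graph (X.G (x.order + 1) ω) := by
    rw [← hx]
    exact hstep
  obtain ⟨S, hS⟩ := exists_eq_attach_of_isUAStep hstep
  exact ⟨x, S, rfl, hx, hS⟩

lemma ae_exists_graph_eq (X : UAProcess m P) (hn : m + 1 ≤ n) :
    ∀ᵐ ω ∂P, ∃ x : UAGraph m, x.order = n ∧ X.G n ω = x.graph := by
  induction n, hn using Nat.le_induction with
  | base =>
    filter_upwards [X.ae_eq_complete] with ω hω
    exact ⟨complete m, rfl, hω⟩
  | succ n hn ih =>
    filter_upwards [X.ae_exists_attach hn ih] with ω ⟨x, S, hx, _, hS⟩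
    exact ⟨x.attach S, congrArg Nat.succ hx, hS⟩

lemma measureReal_attach (X : UAProcess m P) {x : UAGraph m} (hx : m + 1 ≤ x.order) (S : x.Move) :
    P.real {ω | X.G (x.order + 1) ω = (x.attach S).graph} =
      P.real {ω | X.G x.order ω = x.graph} / Fintype.card x.Move := by
  have hcongr : P {ω | X.G (x.order + 1) ω = (x.attach S).graph} =
      P {ω | X.G x.order ω = x.graph ∧
        nbrsIn (X.G (x.order + 1) ω) (x.order + 1) (x.order + 1) = S} := by
    refine measure_congr (eventuallyEq_set.2 ?_)
    filter_upwards [X.ae_exists_attach hx (X.ae_exists_graph_eq hx)] with ω ⟨y, T, hy, hyω, hTω⟩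
    constructor
    · intro (h : X.G (x.order + 1) ω = (x.attach S).graph)
      have hyx : y.attach T = x.attach S :=
        UAGraph.ext (congrArg Nat.succ hy) (hTω.symm.trans h)
      obtain rfl : y = x := congrArg Sigma.fst (@attach_injective m ⟨y, T⟩ ⟨x, S⟩ hyx)
      refine ⟨hyω, ?_⟩
      rw [h, UAGraph.attach, nbrsIn_attachVertex_new y.supported S.subset_Icc]
    · rintro ⟨hxω, hSω⟩
      obtain rfl := UAGraph.ext hy (hyω.symm.trans hxω)
      rw [hTω, UAGraph.attach, nbrsIn_attachVertex_new y.supported T.subset_Icc] at hSω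
      exact Subtype.ext hSω ▸ hTω
  rw [measureReal_def, measureReal_def, hcongr, X.stepUnif x.order hx x.graph x.supported S
    S.card_eq (fun v hv => mem_openFinset.1 (S.subset_openFinset hv)), ENNReal.toReal_div,
    ENNReal.toReal_natCast, card_move]
  rfl

/-- The expectation of `f` at the state of the process at time `n`. -/
def expect (X : UAProcess m P) (n : ℕ) (f : UAGraph m → ℝ) : ℝ :=
  ∑ x ∈ statesOfOrder m n, P.real {ω | X.G n ω = x.graph} * f x

lemma expect_succ (X : UAProcess m P) (hn : m + 1 ≤ n) (f : UAGraph m → ℝ) :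
    X.expect (n + 1) f = X.expect n (walkMean attach f) := by
  have hright : X.expect n (walkMean attach f) =
      ∑ p ∈ (statesOfOrder m n).sigma fun x => (univ : Finset x.Move),
        P.real {ω | X.G n ω = p.1.graph} / Fintype.card p.1.Move * f (p.1.attach p.2) := by
    rw [sum_sigma]
    refine sum_congr rfl fun x _ => ?_
    rw [walkMean_apply, Fintype.expect_eq_sum_div_card, mul_div_left_comm, mul_comm, mul_sum]
  rw [hright]
  symm
  refine sum_of_injOn _ attach_injective.injOn ?_ ?_ ?_
  · rintro ⟨x, S⟩ h
    rw [mem_coe, mem_sigma, mem_statesOfOrder] at h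
    exact mem_coe.2 (mem_statesOfOrder.2 (congrArg Nat.succ h.1))
  · intro y hy hnot
    suffices P {ω | X.G (n + 1) ω = y.graph} = 0 by
      rw [measureReal_def, this, ENNReal.toReal_zero, zero_mul]
    rw [measure_eq_zero_iff_ae_notMem]
    filter_upwards [X.ae_exists_attach hn (X.ae_exists_graph_eq hn)] with ω ⟨x, S, hx, _, hS⟩ hyω
    refine hnot ⟨⟨x, S⟩, mem_coe.2 (mem_sigma.2 ⟨mem_statesOfOrder.2 hx, mem_univ S⟩), ?_⟩
    exact UAGraph.ext ((congrArg Nat.succ hx).trans (mem_statesOfOrder.1 hy).symm)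
      (hS.symm.trans hyω)
  · rintro ⟨x, S⟩ h
    obtain rfl := mem_statesOfOrder.1 (mem_sigma.1 h).1
    rw [X.measureReal_attach hn]

lemma expect_complete (X : UAProcess m P) (f : UAGraph m → ℝ) :
    X.expect (m + 1) f = f (complete m) := by
  have hone : P {ω | X.G (m + 1) ω = (complete m).graph} = 1 := X.init
  have hmem : complete m ∈ statesOfOrder m (m + 1) := mem_statesOfOrder.2 rfl
  rw [expect, sum_eq_single_of_mem (complete m) hmem, measureReal_def, hone, ENNReal.toReal_one,
    one_mul]
  intro x hx hne
  suffices P {ω | X.G (m + 1) ω = x.graph} = 0 by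
    rw [measureReal_def, this, ENNReal.toReal_zero, zero_mul]
  rw [measure_eq_zero_iff_ae_notMem]
  filter_upwards [X.ae_eq_complete] with ω hω hxω
  exact hne (UAGraph.ext (mem_statesOfOrder.1 hx) (hxω.symm.trans hω))

lemma expect_add (X : UAProcess m P) (k : ℕ) (f : UAGraph m → ℝ) :
    X.expect (m + 1 + k) f = (walkMean attach ^ k) f (complete m) := by
  induction k generalizing f with
  | zero => exact X.expect_complete f
  | succ k ih => rw [← add_assoc, X.expect_succ le_self_add, ih, pow_succ, Module.End.mul_apply]

lemma measure_eq_ofReal_expect (X : UAProcess m P) (hn : m + 1 ≤ n)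
    (E : ℕ → SimpleGraph ℕ → Prop) :
    P {ω | E n (X.G n ω)} =
      ENNReal.ofReal (X.expect n fun x => if E x.order x.graph then 1 else 0) := by
  have hcongr : P {ω | E n (X.G n ω)} =
      P (⋃ x ∈ (statesOfOrder m n).filter fun x => E x.order x.graph, {ω | X.G n ω = x.graph}) := by
    refine measure_congr (eventuallyEq_set.2 ?_)
    filter_upwards [X.ae_exists_graph_eq hn] with ω ⟨x, hx, hxω⟩
    have hE : (∃ y : UAGraph m, (y.order = n ∧ E y.order y.graph) ∧ X.G n ω = y.graph) ↔
        E n (X.G n ω) := by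
      refine ⟨?_, fun h => ⟨x, ⟨hx, ?_⟩, hxω⟩⟩
      · rintro ⟨y, ⟨rfl, hy⟩, hyω⟩
        exact hyω ▸ hy
      · rwa [hx, ← hxω]
    simp only [Set.mem_ofPred_eq, Set.mem_iUnion, mem_filter, mem_statesOfOrder, exists_prop, hE]
  have hdisj : Set.PairwiseDisjoint (↑{x ∈ statesOfOrder m n | E x.order x.graph} : Set (UAGraph m))
      fun x => {ω | X.G n ω = x.graph} := by
    intro x hx y hy hne
    refine Set.disjoint_left.2 fun ω (hxω : X.G n ω = x.graph) (hyω : X.G n ω = y.graph) => hne ?_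
    exact UAGraph.ext ((mem_statesOfOrder.1 (mem_filter.1 hx).1).trans
      (mem_statesOfOrder.1 (mem_filter.1 hy).1).symm) (hxω.symm.trans hyω)
  rw [hcongr, measure_biUnion_finset hdisj fun x _ => X.meas n x.graph, expect,
    ENNReal.ofReal_sum_of_nonneg fun x _ => by positivity, sum_filter]
  refine sum_congr rfl fun x _ => ?_
  split_ifs <;> simp

end UAProcess

section

variable {V : Type*} (H : SimpleGraph V) (S : Set V)

/-- The `a`-neighborhood of the open vertices of the graph `g` on `{1, …, n}` has isomorphism type
`(H, S)`, where `S` records the open vertices. -/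
def HasOpenNbhdType (m a n : ℕ) (g : SimpleGraph ℕ) : Prop :=
  ∃ φ : g.induce (openNbhd m n a g) ≃g H,
    ∀ x : openNbhd m n a g, (φ x ∈ S ↔ (x : ℕ) ∈ openVerts m n g)

lemma UAGraph.LocalIso.hasOpenNbhdType_iff {m a : ℕ} {x y : UAGraph m} {φ : Equiv.Perm ℕ}
    {A : Set ℕ} (h : LocalIso a x y φ A) :
    HasOpenNbhdType H S m a x.order x.graph ↔ HasOpenNbhdType H S m a y.order y.graph := by
  have hopen (u : x.nbhd a) : (h.nbhdIso u : ℕ) ∈ openVerts m y.order y.graph ↔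
      (u : ℕ) ∈ openVerts m x.order x.graph := by
    rw [← coe_openFinset, ← coe_openFinset]
    exact h.mem_openFinset_iff u
  constructor
  · rintro ⟨ψ, hψ⟩
    refine ⟨h.nbhdIso.symm.trans ψ, fun v => ?_⟩
    obtain ⟨u, rfl⟩ := h.nbhdIso.surjective v
    rw [hopen, ← hψ, RelIso.trans_apply, RelIso.symm_apply_apply]
  · rintro ⟨ψ, hψ⟩
    exact ⟨h.nbhdIso.trans ψ, fun u => (hψ (h.nbhdIso u)).trans (hopen u)⟩

theorem uniform_attachment_open_neighborhood_type_converges_general (m a : ℕ) {Ω : Type}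
    [MeasurableSpace Ω] (P : Measure Ω) [IsProbabilityMeasure P] (X : UAProcess m P) :
    ∃ L : ℝ≥0∞, Tendsto (fun n => P {ω | HasOpenNbhdType H S m a n (X.G n ω)}) atTop (𝓝 L) := by
  let f (x : UAGraph m) : ℝ := if HasOpenNbhdType H S m a x.order x.graph then 1 else 0
  have hf (x y : UAGraph m) : UAGraph.LocallyIso a x y → f x = f y := by
    rintro ⟨φ, A, h⟩
    simp only [f, h.hasOpenNbhdType_iff H S]
  have hmeet (x y : UAGraph m) : ∃ x' y', ReachIn UAGraph.attach ((a + 1) * (m + 1)) x x' ∧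
      ReachIn UAGraph.attach ((a + 1) * (m + 1)) y y' ∧ UAGraph.LocallyIso a x' y' := by
    obtain ⟨x', y', φ, A, hx, hy, h⟩ := UAGraph.exists_reachIn_localIso a x y
    exact ⟨x', y', hx, hy, φ, A, h⟩
  obtain ⟨L, hL⟩ := (UAGraph.isBisimulation_locallyIso a).exists_tendsto_walkMean_pow hmeet
    UAGraph.card_move_le (f := f) (lo := 0) (hi := 1)
    (fun x => by dsimp only [f]; split_ifs <;> simp)
    (fun x => by dsimp only [f]; split_ifs <;> simp) hf
  refine ⟨ENNReal.ofReal L, (tendsto_add_atTop_iff_nat (m + 1)).1 ?_⟩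
  refine (ENNReal.tendsto_ofReal (hL (UAGraph.complete m))).congr fun k => ?_
  rw [← X.expect_add, add_comm k, X.measure_eq_ofReal_expect le_self_add]

end

/-- For every integer `m > 1`, every radius `a ≥ 1`, every finite graph `H`,
and every subset `S` of the vertices of `H`: in the random uniform attachment graph process
with degree cap `d = 2m`, the probability that there is a graph isomorphism from the
subgraph of `G n` induced on the `a`-neighborhood of the open vertices of `G n` onto `H`
mapping the set of open vertices of `G n` onto `S` converges as `n → ∞`. -/
theorem uniform_attachment_open_neighborhood_type_converges
    (m : ℕ) (hm : 1 < m) (a : ℕ) (ha : 1 ≤ a)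
    {V : Type} [Fintype V] (H : SimpleGraph V) (S : Set V)
    {Ω : Type} [MeasurableSpace Ω] (P : Measure Ω) [IsProbabilityMeasure P]
    (X : UAProcess m P) :
    ∃ L : ℝ≥0∞,
      Tendsto (fun n => P {ω |
          ∃ φ : (X.G n ω).induce (openNbhd m n a (X.G n ω)) ≃g H,
            ∀ x : openNbhd m n a (X.G n ω),
              (φ x ∈ S ↔ (x : ℕ) ∈ openVerts m n (X.G n ω))})
        atTop (𝓝 L) :=
  uniform_attachment_open_neighborhood_type_converges_general H S m a P X
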